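/- For every d ≥ 2 there exists a universal decoupling sequence: a finite family of unitary d×d matrices u_1,…,u_k and reals α_1,…,α_k ≥ 0 with Σ_i α_i = 1 such that for EVERY Hermitian d²×d² matrix h with tr(h) = 0 and tr(h Π_d) = 0 one has Σ_i α_i (u_i ⊗ u_i)† h (u_i ⊗ u_i) = 0. -/

import Mathlib

open Matrix Kronecker
open scoped BigOperators

/-- The swap operator `Π_d` on `ℂ^d ⊗ ℂ^d`. -/
def swapOp (d : ℕ) : Matrix (Fin d × Fin d) (Fin d × Fin d) ℂ :=
  fun p q => if p.1 = q.2 ∧ p.2 = q.1 then 1 else 0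

theorem ud_isCompact_convexHull {E : Type} [AddCommGroup E] [Module ℝ E] [TopologicalSpace E]
    [IsTopologicalAddGroup E] [ContinuousSMul ℝ E] [FiniteDimensional ℝ E] {s : Set E}
    (hs : IsCompact s) : IsCompact (convexHull ℝ s) := by
  classical
  let n := Module.finrank ℝ E + 1
  let f : (Fin n → ℝ) × (Fin n → E) → E := fun p => ∑ i, p.1 i • p.2 i
  have hf : Continuous f := by fun_prop
  have hK : IsCompact ((stdSimplex ℝ (Fin n)) ×ˢ (Set.pi Set.univ (fun _ : Fin n => s))) :=
    (isCompact_stdSimplex ℝ (Fin n)).prod (isCompact_univ_pi (fun _ => hs))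
  have : convexHull ℝ s = f '' ((stdSimplex ℝ (Fin n)) ×ˢ (Set.pi Set.univ (fun _ : Fin n => s))) := by
    apply Set.Subset.antisymm
    · intro x hx
      obtain ⟨ι, _, z, w, hz, hind, hw0, hw1, hx⟩ := eq_pos_convex_span_of_mem_convexHull hx
      have hcard : Fintype.card ι ≤ Fintype.card (Fin n) := by
        rw [Fintype.card_fin]
        have h1 := hind.card_le_finrank_succ
        have h2 := Submodule.finrank_le (vectorSpan ℝ (Set.range z))
        omega
      obtain ⟨e⟩ := Function.Embedding.nonempty_of_card_le hcard
      have hne : Nonempty ι := by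
        by_contra hcon
        rw [not_nonempty_iff] at hcon
        simp at hw1
      obtain ⟨i0⟩ := hne
      refine ⟨(Function.extend e w 0, Function.extend e z (fun _ => z i0)), ⟨⟨?_, ?_⟩, ?_⟩, ?_⟩
      · intro j
        by_cases hj : ∃ i, e i = j
        · obtain ⟨i, rfl⟩ := hj
          simpa [e.injective.extend_apply] using (hw0 i).le
        · simp [Function.extend_apply' _ _ _ hj]
      · rw [← hw1]
        symm
        apply Finset.sum_of_injOn e e.injective.injOn (by simp)
        · intro j _ hj
          simp only [Finset.coe_univ, Set.image_univ, Set.mem_range] at hj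
          exact Function.extend_apply' _ _ _ hj
        · intro i _
          simp [e.injective.extend_apply]
      · intro j _
        by_cases hj : ∃ i, e i = j
        · obtain ⟨i, rfl⟩ := hj
          simpa [e.injective.extend_apply] using hz ⟨i, rfl⟩
        · simpa [Function.extend_apply' _ _ _ hj] using hz ⟨i0, rfl⟩
      · rw [← hx]
        symm
        apply Finset.sum_of_injOn e e.injective.injOn (by simp)
        · intro j _ hj
          simp only [Finset.coe_univ, Set.image_univ, Set.mem_range] at hj
          simp [Function.extend_apply' _ _ _ hj]
        · intro i _
          simp [e.injective.extend_apply]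
    · rintro x ⟨⟨w, z⟩, ⟨⟨hw0, hw1⟩, hz⟩, rfl⟩
      exact mem_convexHull_of_exists_fintype w z hw0 hw1 (fun i => hz i trivial) rfl
  rw [this]
  exact hK.image hf

theorem ud_isCompact_unitary (d : ℕ) :
    IsCompact (Matrix.unitaryGroup (Fin d) ℂ : Set (Matrix (Fin d) (Fin d) ℂ)) := by
  have hK : IsCompact (Set.pi Set.univ (fun _ : Fin d => Set.pi Set.univ
      (fun _ : Fin d => Metric.closedBall (0 : ℂ) 1))) :=
    isCompact_univ_pi fun _ => isCompact_univ_pi fun _ => isCompact_closedBall _ _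
  refine IsCompact.of_isClosed_subset (X := Matrix (Fin d) (Fin d) ℂ) hK ?_ ?_
  · have : (Matrix.unitaryGroup (Fin d) ℂ : Set (Matrix (Fin d) (Fin d) ℂ))
        = {u | u * uᴴ = 1} := by
      ext u
      simp [Matrix.mem_unitaryGroup_iff, star_eq_conjTranspose]
    rw [this]
    exact isClosed_eq (by fun_prop) continuous_const
  · intro u hu i _ j _
    simpa using entry_norm_bound_of_unitary hu i j

open scoped ComplexOrder in
theorem ud_invariant {N : Type} [Fintype N] [DecidableEq N] (G : Set (Matrix N N ℂ))
    (hG : IsCompact G) (hne : G.Nonempty) (hu : ∀ g ∈ G, g * gᴴ = 1)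
    (hmul : ∀ g ∈ G, ∀ v ∈ G, g * v ∈ G) :
    ∃ (ι : Type) (_ : Fintype ι) (α : ι → ℝ) (g : ι → Matrix N N ℂ),
      (∀ i, 0 ≤ α i) ∧ ∑ i, α i = 1 ∧ (∀ i, g i ∈ G) ∧
      ∀ h : Matrix N N ℂ, ∀ v ∈ G,
        vᴴ * (∑ i, (α i : ℂ) • ((g i)ᴴ * h * g i)) * v = ∑ i, (α i : ℂ) • ((g i)ᴴ * h * g i) := by
  let x : Matrix N N ℂ → (N × N → Matrix N N ℂ) := fun g p => gᴴ * Matrix.single p.1 p.2 1 * g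
  have hxc : Continuous x := by fun_prop
  have hK : IsCompact (convexHull ℝ (x '' G)) := ud_isCompact_convexHull (hG.image hxc)
  let f : (N × N → Matrix N N ℂ) → ℝ := fun y => ∑ p, (Matrix.trace ((y p)ᴴ * y p)).re
  have hfc : Continuous f := by fun_prop
  obtain ⟨T, hT, hmin⟩ := hK.exists_isMinOn ((hne.image x).convexHull) hfc.continuousOn
  have hnn : ∀ M : Matrix N N ℂ, 0 ≤ (Matrix.trace (Mᴴ * M)).re := by
    intro M
    have := (Matrix.posSemidef_conjTranspose_mul_self M).trace_nonneg
    exact (Complex.le_def.1 this).1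
  have hzero : ∀ y, f y ≤ 0 → y = 0 := by
    intro y hy
    have h0 : f y = 0 := le_antisymm hy (Finset.sum_nonneg fun p _ => hnn _)
    rw [Finset.sum_eq_zero_iff_of_nonneg (fun p _ => hnn _)] at h0
    funext p
    rw [Pi.zero_apply, ← Matrix.trace_conjTranspose_mul_self_eq_zero_iff]
    have := (Matrix.posSemidef_conjTranspose_mul_self (y p)).trace_nonneg
    apply Complex.ext
    · exact h0 p (Finset.mem_univ _)
    · exact (Complex.le_def.1 this).2.symm
  have hpar : ∀ a b, f ((1/2 : ℝ) • a + (1/2 : ℝ) • b) = (f a + f b) / 2 - f (a - b) / 4 := by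
    intro a b
    simp only [f, ← Finset.sum_add_distrib, Finset.sum_div, ← Finset.sum_sub_distrib]
    refine Finset.sum_congr rfl fun p _ => ?_
    simp only [Pi.add_apply, Pi.sub_apply, Pi.smul_apply, conjTranspose_add, conjTranspose_sub,
      conjTranspose_smul, Matrix.add_mul, Matrix.mul_add, Matrix.sub_mul, Matrix.mul_sub,
      Matrix.smul_mul, Matrix.mul_smul, Matrix.trace_add, Matrix.trace_sub, Matrix.trace_smul,
      Complex.add_re, Complex.sub_re, Complex.real_smul, star_trivial, Complex.re_ofReal_mul]
    ring
  have hinv : ∀ v ∈ G, ∀ p, vᴴ * T p * v = T p := by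
    intro v hv
    let L : (N × N → Matrix N N ℂ) →ₗ[ℝ] (N × N → Matrix N N ℂ) :=
      { toFun := fun y p => vᴴ * y p * v
        map_add' := by intro a b; funext p; simp [Matrix.mul_add, Matrix.add_mul]
        map_smul' := by intro a b; funext p; simp }
    have hLT : L T ∈ convexHull ℝ (x '' G) := by
      have h1 : L T ∈ L '' convexHull ℝ (x '' G) := ⟨T, hT, rfl⟩
      rw [L.image_convexHull] at h1
      refine convexHull_mono ?_ h1
      rintro _ ⟨_, ⟨g, hg, rfl⟩, rfl⟩
      refine ⟨g * v, hmul g hg v hv, ?_⟩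
      funext p
      simp [x, L, Matrix.mul_assoc]
    have hfL : f (L T) = f T := by
      refine Finset.sum_congr rfl fun p _ => ?_
      congr 1
      have e : (L T p)ᴴ * L T p = vᴴ * ((T p)ᴴ * T p * v) := by
        have : (L T p)ᴴ * L T p = vᴴ * ((T p)ᴴ * (v * vᴴ) * T p * v) := by
          simp [L, Matrix.mul_assoc]
        rw [this, hu v hv, Matrix.mul_one]
      rw [e, Matrix.trace_mul_comm, Matrix.mul_assoc, hu v hv, Matrix.mul_one]
    have hmid : (1/2 : ℝ) • T + (1/2 : ℝ) • L T ∈ convexHull ℝ (x '' G) :=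
      convex_convexHull ℝ _ hT hLT (by norm_num) (by norm_num) (by norm_num)
    have h2 : f T ≤ _ := hmin hmid
    rw [hpar, hfL] at h2
    have h3 := hzero (T - L T) (by linarith)
    intro p
    exact (congrFun (sub_eq_zero.1 h3) p).symm
  obtain ⟨ι, hι, w, z, hw0, hw1, hz, hsum⟩ := mem_convexHull_iff_exists_fintype.1 hT
  choose g hg hgz using hz
  refine ⟨ι, hι, w, g, hw0, hw1, hg, ?_⟩
  intro h v hv
  have key : ∑ i, (w i : ℂ) • ((g i)ᴴ * h * g i) = ∑ p : N × N, h p.1 p.2 • T p := by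
    rw [← hsum]
    simp only [Finset.sum_apply, Pi.smul_apply, ← hgz, x]
    simp_rw [Finset.smul_sum]
    rw [Finset.sum_comm]
    refine Finset.sum_congr rfl fun i _ => ?_
    conv_lhs => rw [Matrix.matrix_eq_sum_single h]
    rw [← Finset.univ_product_univ, Finset.sum_product]
    simp only [Matrix.mul_sum, Matrix.sum_mul, Finset.smul_sum]
    refine Finset.sum_congr rfl fun a _ => Finset.sum_congr rfl fun b _ => ?_
    have : Matrix.single a b (h a b) = h a b • Matrix.single a b (1:ℂ) := by simp
    rw [this, Matrix.mul_smul, Matrix.smul_mul, smul_comm]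
    congr 1
  rw [key, Matrix.mul_sum, Matrix.sum_mul]
  refine Finset.sum_congr rfl fun p _ => ?_
  rw [Matrix.mul_smul, Matrix.smul_mul, hinv v hv]

theorem ud_commutant (d : ℕ) (hd : 2 ≤ d) (X : Matrix (Fin d × Fin d) (Fin d × Fin d) ℂ)
    (hX : ∀ u ∈ Matrix.unitaryGroup (Fin d) ℂ, (u ⊗ₖ u)ᴴ * X * (u ⊗ₖ u) = X)
    (ht : X.trace = 0) (hs : (X * swapOp d).trace = 0) : X = 0 := by
  have hcomm : ∀ u ∈ Matrix.unitaryGroup (Fin d) ℂ, X * (u ⊗ₖ u) = (u ⊗ₖ u) * X := by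
    intro u hu
    have h1 : (u ⊗ₖ u) * (u ⊗ₖ u)ᴴ = 1 := by
      rw [conjTranspose_kronecker, ← mul_kronecker_mul, ← star_eq_conjTranspose,
        Matrix.mem_unitaryGroup_iff.1 hu, Matrix.one_kronecker_one]
    conv_rhs => rw [← hX u hu]
    rw [← Matrix.mul_assoc, ← Matrix.mul_assoc, h1, Matrix.one_mul]
  -- support
  have hsupp : ∀ i j k l, X (i, j) (k, l) ≠ 0 → (i = k ∧ j = l) ∨ (i = l ∧ j = k) := by
    intro i j k l hne
    have hc : ∀ a : Fin d, (if i = a then Complex.I else 1) * (if j = a then Complex.I else 1)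
        = (if k = a then Complex.I else 1) * (if l = a then Complex.I else 1) := by
      intro a
      have hu : Matrix.diagonal (fun i => if i = a then Complex.I else 1)
          ∈ Matrix.unitaryGroup (Fin d) ℂ := by
        rw [Matrix.mem_unitaryGroup_iff, star_eq_conjTranspose, Matrix.diagonal_conjTranspose,
          Matrix.diagonal_mul_diagonal, ← Matrix.diagonal_one]
        congr 1
        funext i
        by_cases h : i = a <;> simp [h]
      have h := congrFun (congrFun (hcomm _ hu) (i, j)) (k, l)
      rw [Matrix.diagonal_kronecker_diagonal, Matrix.mul_diagonal, Matrix.diagonal_mul, mul_comm] at h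
      exact (mul_right_cancel₀ hne h).symm
    have e1 : Complex.I ≠ 1 := by intro h; simpa using congrArg Complex.re h
    have e2 : (-1 : ℂ) ≠ Complex.I := by intro h; simpa using congrArg Complex.re h
    have e3 : (-1 : ℂ) ≠ 1 := by norm_num
    have hi := hc i
    have hj := hc j
    by_cases h1 : i = k
    · by_cases h2 : j = l
      · exact Or.inl ⟨h1, h2⟩
      · subst h1
        exfalso
        by_cases h3 : i = j
        · subst h3
          simp [Ne.symm h2] at hi
          exact e2 hi
        · simp [h3, Ne.symm h2] at hj
          exact e1 hj
    · by_cases h2 : i = l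
      · by_cases h3 : j = k
        · exact Or.inr ⟨h2, h3⟩
        · subst h2
          exfalso
          by_cases h4 : i = j
          · subst h4
            simp [Ne.symm h1] at hi
            exact e2 hi
          · simp [h4, Ne.symm h3] at hj
            exact e1 hj
      · exfalso
        by_cases h4 : j = i
        · simp [Ne.symm h1, Ne.symm h2, h4] at hi
          exact e3 hi
        · simp [Ne.symm h1, Ne.symm h2, h4] at hi
          exact e1 hi
  -- permutations
  have hperm : ∀ (σ : Equiv.Perm (Fin d)) i j k l, X (σ i, σ j) (σ k, σ l) = X (i, j) (k, l) := by
    intro σ i j k l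
    have hu : σ.permMatrix ℂ ∈ Matrix.unitaryGroup (Fin d) ℂ := by
      rw [Matrix.mem_unitaryGroup_iff, star_eq_conjTranspose, Matrix.conjTranspose_permMatrix,
        ← Matrix.permMatrix_mul]
      simp
    have hap : ∀ a b, σ.permMatrix ℂ a b = if σ a = b then 1 else 0 := by
      intro a b
      simp [Equiv.Perm.permMatrix, PEquiv.toMatrix_apply, eq_comm]
    have h := congrFun (congrFun (hcomm _ hu) (i, j)) (σ k, σ l)
    rw [Matrix.mul_apply, Matrix.mul_apply, Fintype.sum_eq_single (k, l),
      Fintype.sum_eq_single (σ i, σ j)] at h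
    · simpa [Matrix.kronecker_apply, hap] using h.symm
    · rintro ⟨a, b⟩ hab
      simp only [Matrix.kronecker_apply, hap]
      grind
    · rintro ⟨a, b⟩ hab
      simp only [Matrix.kronecker_apply, hap, EmbeddingLike.apply_eq_iff_eq]
      grind
  -- a reflection mixing two coordinates
  have hrot : ∀ a b, a ≠ b → X (a, a) (a, a) = X (a, b) (a, b) + X (a, b) (b, a) := by
    intro a b hab
    let v : Fin d → ℂ := Pi.single a 1 + Pi.single b 2
    have hvv : v ⬝ᵥ v = 5 := by
      simp [v, hab, Ne.symm hab]; norm_num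
    have hvs : star v = v := by
      simp [v, Pi.star_single]
    let u : Matrix (Fin d) (Fin d) ℂ := 1 - (2/5 : ℂ) • Matrix.vecMulVec v v
    have hu : u ∈ Matrix.unitaryGroup (Fin d) ℂ := by
      have h1 : uᴴ = u := by
        simp [u, Matrix.conjTranspose_vecMulVec, hvs]
      have h2 : Matrix.vecMulVec v v * Matrix.vecMulVec v v = (5:ℂ) • Matrix.vecMulVec v v := by
        rw [Matrix.vecMulVec_mul_vecMulVec, hvv]
        simp
      rw [Matrix.mem_unitaryGroup_iff, star_eq_conjTranspose, h1]
      simp only [u, Matrix.sub_mul, Matrix.mul_sub, Matrix.one_mul, Matrix.mul_one,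
        Matrix.smul_mul, Matrix.mul_smul, h2, smul_smul]
      module
    have haa : u a a = 3/5 := by
      simp [u, v, Matrix.vecMulVec_apply, hab]; norm_num
    have hab' : u a b = -4/5 := by
      simp [u, v, Matrix.vecMulVec_apply, hab, Ne.symm hab]; norm_num
    have hak : ∀ k, k ≠ a → k ≠ b → u a k = 0 := by
      intro k h1 h2
      simp [u, v, Matrix.vecMulVec_apply, h1, h2, Ne.symm h1]
    have h := congrFun (congrFun (hcomm _ hu) (a, a)) (a, b)
    rw [Matrix.mul_apply, Matrix.mul_apply, Fintype.sum_eq_single (a, a),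
      Fintype.sum_eq_add (a, b) (b, a) (by simp [hab])] at h
    · have hsw : X (b, a) (a, b) = X (a, b) (b, a) := by
        simpa using hperm (Equiv.swap a b) a b b a
      simp only [Matrix.kronecker_apply, haa, hab', hsw] at h
      linear_combination (-25/12 : ℂ) * h
    · rintro ⟨k, l⟩ ⟨h1, h2⟩
      have : X (k, l) (a, b) = 0 := by
        by_contra hne
        rcases hsupp _ _ _ _ hne with ⟨rfl, rfl⟩ | ⟨rfl, rfl⟩ <;> simp_all
      rw [this, mul_zero]
    · rintro ⟨k, l⟩ h1
      have : X (a, a) (k, l) = 0 := by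
        by_contra hne
        rcases hsupp _ _ _ _ hne with ⟨rfl, rfl⟩ | ⟨rfl, rfl⟩ <;> simp_all
      rw [this, zero_mul]
  let i0 : Fin d := ⟨0, by omega⟩
  let i1 : Fin d := ⟨1, by omega⟩
  have h01 : i0 ≠ i1 := by simp [i0, i1]
  have htrans : ∀ i j : Fin d, i ≠ j → ∃ σ : Equiv.Perm (Fin d), σ i0 = i ∧ σ i1 = j := by
    intro i j hij
    have ht : i ≠ Equiv.swap i0 i i1 := by
      intro h
      have : Equiv.swap i0 i i0 = Equiv.swap i0 i i1 := by rw [Equiv.swap_apply_left]; exact h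
      exact h01 ((Equiv.swap i0 i).injective this)
    refine ⟨Equiv.swap (Equiv.swap i0 i i1) j * Equiv.swap i0 i, ?_, ?_⟩
    · rw [Equiv.Perm.mul_apply, Equiv.swap_apply_left, Equiv.swap_apply_of_ne_of_ne ht hij]
    · rw [Equiv.Perm.mul_apply, Equiv.swap_apply_left]
  obtain ⟨q, hq⟩ : ∃ q, q = X (i0, i1) (i0, i1) := ⟨_, rfl⟩
  obtain ⟨r, hr⟩ : ∃ r, r = X (i0, i1) (i1, i0) := ⟨_, rfl⟩
  have hqa : ∀ i j, i ≠ j → X (i, j) (i, j) = q := by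
    intro i j hij
    obtain ⟨σ, rfl, rfl⟩ := htrans i j hij
    rw [hperm, hq]
  have hra : ∀ i j, i ≠ j → X (i, j) (j, i) = r := by
    intro i j hij
    obtain ⟨σ, rfl, rfl⟩ := htrans i j hij
    rw [hperm, hr]
  have hpa : ∀ i, X (i, i) (i, i) = q + r := by
    intro i
    obtain ⟨j, hj⟩ : ∃ j, i ≠ j := by
      by_cases h : i = i0
      · exact ⟨i1, h ▸ h01⟩
      · exact ⟨i0, h⟩
    rw [hrot i j hj, hqa i j hj, hra i j hj]
  have hform : X = q • 1 + r • swapOp d := by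
    ext ⟨i, j⟩ ⟨k, l⟩
    simp only [Matrix.add_apply, Matrix.smul_apply, Matrix.one_apply, swapOp, Prod.mk.injEq,
      smul_eq_mul]
    by_cases h1 : i = k ∧ j = l
    · obtain ⟨rfl, rfl⟩ := h1
      by_cases h2 : i = j
      · subst h2; simp [hpa]
      · simp [hqa i j h2, h2]
    · by_cases h2 : i = l ∧ j = k
      · obtain ⟨rfl, rfl⟩ := h2
        have h3 : i ≠ j := by rintro rfl; simp at h1
        simp [hra i j h3, h3]
      · have : X (i, j) (k, l) = 0 := by
          by_contra hne
          rcases hsupp _ _ _ _ hne with h | h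
          · exact h1 h
          · exact h2 h
        simp [this, h1, h2]
  have hts : (swapOp d).trace = d := by
    simp only [Matrix.trace, Matrix.diag, swapOp, Fintype.sum_prod_type]
    have : ∀ x y : Fin d, (x = y ∧ y = x) ↔ x = y := fun x y => ⟨fun h => h.1, fun h => ⟨h, h.symm⟩⟩
    simp [this]
  have hss : swapOp d * swapOp d = 1 := by
    ext ⟨i, j⟩ ⟨k, l⟩
    rw [Matrix.mul_apply, Fintype.sum_eq_single (j, i)]
    · simp only [swapOp, Matrix.one_apply, Prod.mk.injEq]
      grind
    · rintro ⟨a, b⟩ hab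
      simp only [swapOp]
      grind
  have ht1 : (1 : Matrix (Fin d × Fin d) (Fin d × Fin d) ℂ).trace = d * d := by
    simp
  rw [hform] at ht hs
  simp only [Matrix.add_mul, Matrix.smul_mul, Matrix.one_mul, hss, Matrix.trace_add,
    Matrix.trace_smul, hts, ht1, smul_eq_mul] at ht hs
  have hd0 : (d : ℂ) ≠ 0 := by
    exact_mod_cast (by omega : d ≠ 0)
  have hd1 : (d : ℂ) * d - 1 ≠ 0 := by
    intro h
    have h' : (d : ℂ) * d = 1 := by linear_combination h
    have h2 : d * d = 1 := by exact_mod_cast h'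
    nlinarith
  have hA : q * d + r = 0 := by
    apply mul_right_cancel₀ hd0; linear_combination ht
  have hB : q + r * d = 0 := by
    apply mul_right_cancel₀ hd0; linear_combination hs
  have hr0 : r = 0 := by
    apply mul_right_cancel₀ hd1; linear_combination d * hB - hA
  have hq0 : q = 0 := by rw [hr0] at hB; simpa using hB
  rw [hform, hr0, hq0]; simp

theorem universal_decoupling_sequence (d : ℕ) (hd : 2 ≤ d) :
    ∃ (k : ℕ) (u : Fin k → Matrix (Fin d) (Fin d) ℂ) (α : Fin k → ℝ),
      (∀ i, u i ∈ Matrix.unitaryGroup (Fin d) ℂ) ∧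
      (∀ i, 0 ≤ α i) ∧ (∑ i, α i = 1) ∧
      ∀ h : Matrix (Fin d × Fin d) (Fin d × Fin d) ℂ,
        h.IsHermitian → h.trace = 0 → (h * swapOp d).trace = 0 →
        ∑ i, (α i : ℂ) • ((u i ⊗ₖ u i)ᴴ * h * (u i ⊗ₖ u i)) = 0 := by
  let κ : Matrix (Fin d) (Fin d) ℂ → Matrix (Fin d × Fin d) (Fin d × Fin d) ℂ := fun u => u ⊗ₖ u
  have hκ : Continuous κ := by
    refine continuous_matrix fun p q => ?_
    change Continuous fun u : Matrix (Fin d) (Fin d) ℂ => u p.1 q.1 * u p.2 q.2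
    fun_prop
  have hone : ∀ u ∈ Matrix.unitaryGroup (Fin d) ℂ, (u ⊗ₖ u) * (u ⊗ₖ u)ᴴ = 1 := by
    intro u hu
    rw [conjTranspose_kronecker, ← mul_kronecker_mul, ← star_eq_conjTranspose,
      Matrix.mem_unitaryGroup_iff.1 hu, Matrix.one_kronecker_one]
  obtain ⟨ι, _, α, g, hα0, hα1, hg, hinv⟩ := ud_invariant
    (κ '' (Matrix.unitaryGroup (Fin d) ℂ : Set (Matrix (Fin d) (Fin d) ℂ)))
    ((ud_isCompact_unitary d).image hκ) ⟨κ 1, 1, one_mem _, rfl⟩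
    (by rintro _ ⟨u, hu, rfl⟩; exact hone u hu)
    (by
      rintro _ ⟨u, hu, rfl⟩ _ ⟨v, hv, rfl⟩
      exact ⟨u * v, mul_mem hu hv, Matrix.mul_kronecker_mul _ _ _ _⟩)
  choose w hw hwg using hg
  obtain rfl : (fun i => κ (w i)) = g := funext hwg
  let e := Fintype.equivFin ι
  refine ⟨Fintype.card ι, fun i => w (e.symm i), fun i => α (e.symm i), fun i => hw _,
    fun i => hα0 _, ?_, ?_⟩
  · rw [e.symm.sum_comp α]; exact hα1
  · intro h _ ht hs
    rw [e.symm.sum_comp (fun i => (α i : ℂ) • ((w i ⊗ₖ w i)ᴴ * h * (w i ⊗ₖ w i)))]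
    have hα1' : ∑ i, (α i : ℂ) = 1 := by exact_mod_cast hα1
    have hsw : ∀ u : Matrix (Fin d) (Fin d) ℂ, (u ⊗ₖ u) * swapOp d = swapOp d * (u ⊗ₖ u) := by
      intro u
      ext ⟨i, j⟩ ⟨k, l⟩
      rw [Matrix.mul_apply, Matrix.mul_apply, Fintype.sum_eq_single (l, k),
        Fintype.sum_eq_single (j, i)]
      · simp [swapOp, mul_comm]
      · rintro ⟨a, b⟩ hab
        simp only [swapOp]
        grind
      · rintro ⟨a, b⟩ hab
        simp only [swapOp]
        grind
    apply ud_commutant d hd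
    · intro u hu
      exact hinv h (κ u) ⟨u, hu, rfl⟩
    · rw [Matrix.trace_sum]
      refine Finset.sum_eq_zero fun i _ => ?_
      rw [Matrix.trace_smul, Matrix.mul_assoc, Matrix.trace_mul_comm, Matrix.mul_assoc,
        hone _ (hw i), Matrix.mul_one, ht, smul_zero]
    · rw [Matrix.sum_mul, Matrix.trace_sum]
      refine Finset.sum_eq_zero fun i _ => ?_
      rw [Matrix.smul_mul, Matrix.trace_smul, Matrix.mul_assoc, hsw, Matrix.mul_assoc,
        Matrix.trace_mul_comm, Matrix.mul_assoc, Matrix.mul_assoc, hone _ (hw i), Matrix.mul_one,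
        hs, smul_zero]
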